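/- arXiv:0907.4230 — 2 statements merged into one kernel-verified Lean document; each statement's English description precedes it below -/
import Mathlib

section
/- For every pair of positive integers r, k, there exists a positive integer d in D_{r,k}; that is, there is a nonzero d such that the tuple (d·k/gcd(r,k), d·r/gcd(r,k), r, k) is configurable. -/
open SimpleGraph

/-- A `(v, b, r, k)`-combinatorial configuration: a bipartite simple graph on
`Fin v ⊕ Fin b` (left part `Fin v`, right part `Fin b`), connected (here:
preconnected, so that the empty graph counts as a configuration), where every
left vertex has degree `r`, every right vertex has degree `k`, and there is no
cycle of length `4`. -/
def IsConfiguration (v b r k : ℕ) (G : SimpleGraph (Fin v ⊕ Fin b)) : Prop :=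
  (∀ i j : Fin v, ¬ G.Adj (Sum.inl i) (Sum.inl j)) ∧
  (∀ i j : Fin b, ¬ G.Adj (Sum.inr i) (Sum.inr j)) ∧
  G.Preconnected ∧
  (∀ i : Fin v, (G.neighborSet (Sum.inl i)).ncard = r) ∧
  (∀ j : Fin b, (G.neighborSet (Sum.inr j)).ncard = k) ∧
  (∀ (x : Fin v ⊕ Fin b) (c : G.Walk x x), c.IsCycle → c.length ≠ 4)

/-- The tuple `(v, b, r, k)` is configurable if a `(v,b,r,k)`-combinatorial
configuration exists. -/
def Configurable (v b r k : ℕ) : Prop :=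
  ∃ G : SimpleGraph (Fin v ⊕ Fin b), IsConfiguration v b r k G

/-- `D r k` is the set of `d ∈ ℕ` such that
`(d·k/gcd(r,k), d·r/gcd(r,k), r, k)` is configurable. -/
def D (r k : ℕ) : Set ℕ :=
  {d | Configurable (d * k / Nat.gcd r k) (d * r / Nat.gcd r k) r k}

/-!
Give the complete bipartite graph with parts `{0, …, k - 1}` and `{0, …, r - 1}` the voltage
`a * c` on the edge `(a, c)`, with values in `ZMod n` for `n = (k - 1) * (r - 1) + 1`, and take the
lift: the point `(a, x)` is joined to the line `(c, x + a * c)`. A 4-cycle in the lift would give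
`(a - a') * (c - c') = 0` in `ZMod n` with both factors nonzero, which is impossible because the
product is smaller than `n` in absolute value. Since the row `a = 0` and the column `c = 0` have
zero voltage, the lift is connected as soon as the voltages generate `ZMod n`, and they do since
the largest of them is `n - 1 = -1`.
-/

section IncidenceGraph

variable {P L P' L' : Type*} {I : P → L → Prop}

/-- The bipartite graph on `P ⊕ L` with an edge between `p` and `l` whenever `I p l`; the notation
suggests an incidence structure with points `P` and lines `L`. -/
def incidenceGraph (I : P → L → Prop) : SimpleGraph (P ⊕ L) where
  Adj
    | .inl p, .inr l => I p l
    | .inr l, .inl p => I p l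
    | _, _ => False
  symm := ⟨by rintro (p | l) (p' | l') h <;> exact h⟩
  loopless := ⟨by rintro (p | l) h <;> exact h⟩

@[simp]
theorem incidenceGraph_adj_inl_inl {p p' : P} : ¬ (incidenceGraph I).Adj (.inl p) (.inl p') := id

@[simp]
theorem incidenceGraph_adj_inr_inr {l l' : L} : ¬ (incidenceGraph I).Adj (.inr l) (.inr l') := id

@[simp]
theorem incidenceGraph_adj_inl_inr {p : P} {l : L} :
    (incidenceGraph I).Adj (.inl p) (.inr l) ↔ I p l := Iff.rfl

@[simp]
theorem incidenceGraph_adj_inr_inl {l : L} {p : P} :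
    (incidenceGraph I).Adj (.inr l) (.inl p) ↔ I p l := Iff.rfl

theorem neighborSet_incidenceGraph_inl (p : P) :
    (incidenceGraph I).neighborSet (.inl p) = Sum.inr '' {l | I p l} := by
  ext (p' | l) <;> simp

theorem neighborSet_incidenceGraph_inr (l : L) :
    (incidenceGraph I).neighborSet (.inr l) = Sum.inl '' {p | I p l} := by
  ext (p | l') <;> simp

theorem incidenceGraph_comap (I : P → L → Prop) (f : P' → P) (g : L' → L) :
    (incidenceGraph I).comap (Sum.map f g) = incidenceGraph fun p l ↦ I (f p) (g l) := by
  ext (p | l) (p' | l') <;> rfl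

end IncidenceGraph

section PartialLinear

theorem length_ne_four_of_subsingleton_commonNeighbors {V : Type*} {G : SimpleGraph V}
    (hG : ∀ x y, x ≠ y → (G.commonNeighbors x y).Subsingleton) {x : V} {c : G.Walk x x}
    (hc : c.IsCycle) : c.length ≠ 4 := by
  intro hlen
  obtain ⟨f⟩ : cycleGraph 4 ⊑ G := (cycleGraph_isContained_iff (by decide)).2 ⟨x, c, hc, hlen⟩
  have hadj {i j : Fin 4} (h : (cycleGraph 4).Adj i j) : G.Adj (f i) (f j) := f.toHom.map_adj h
  have hmem (i : Fin 4) (h₀ : (cycleGraph 4).Adj 0 i) (h₂ : (cycleGraph 4).Adj 2 i) :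
      f i ∈ G.commonNeighbors (f 0) (f 2) := ⟨hadj h₀, hadj h₂⟩
  have hne : f 0 ≠ f 2 := f.injective.ne (by decide)
  have heq : f 1 = f 3 :=
    hG _ _ hne (hmem 1 (by decide) (by decide)) (hmem 3 (by decide) (by decide))
  exact absurd (f.injective heq) (by decide)

/-- An incidence relation is partial linear if two distinct points lie on at most one common
line, or equivalently two distinct lines meet in at most one point. -/
def IsPartialLinear {P L : Type*} (I : P → L → Prop) : Prop :=
  ∀ ⦃p p' l l'⦄, I p l → I p' l → I p l' → I p' l' → p = p' ∨ l = l'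

variable {P L P' L' : Type*} {I : P → L → Prop}

theorem IsPartialLinear.comap (hI : IsPartialLinear I) {f : P' → P} {g : L' → L}
    (hf : f.Injective) (hg : g.Injective) : IsPartialLinear fun p l ↦ I (f p) (g l) :=
  fun _ _ _ _ h₁ h₂ h₃ h₄ ↦ (hI h₁ h₂ h₃ h₄).imp (@hf _ _) (@hg _ _)

theorem IsPartialLinear.subsingleton_commonNeighbors (hI : IsPartialLinear I) {x y : P ⊕ L}
    (hxy : x ≠ y) : ((incidenceGraph I).commonNeighbors x y).Subsingleton := by
  rintro z ⟨hxz, hyz⟩ w ⟨hxw, hyw⟩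
  rcases x with p | l <;> rcases y with p' | l' <;> rcases z with q | m <;>
    rcases w with q' | m' <;> try contradiction
  · exact congrArg Sum.inr ((hI hxz hyz hxw hyw).resolve_left fun h ↦ hxy (congrArg _ h))
  · exact congrArg Sum.inl ((hI hxz hxw hyz hyw).resolve_right fun h ↦ hxy (congrArg _ h))

end PartialLinear

section Configuration

theorem isConfiguration_incidenceGraph {v b r k : ℕ} {I : Fin v → Fin b → Prop}
    (hr : ∀ p, {l | I p l}.ncard = r) (hk : ∀ l, {p | I p l}.ncard = k)
    (hI : IsPartialLinear I) (hconn : (incidenceGraph I).Preconnected) :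
    IsConfiguration v b r k (incidenceGraph I) := by
  refine ⟨fun _ _ ↦ id, fun _ _ ↦ id, hconn, fun p ↦ ?_, fun l ↦ ?_, fun _ _ ↦
    length_ne_four_of_subsingleton_commonNeighbors fun _ _ ↦ hI.subsingleton_commonNeighbors⟩
  · rw [neighborSet_incidenceGraph_inl, Set.ncard_image_of_injective _ Sum.inr_injective, hr]
  · rw [neighborSet_incidenceGraph_inr, Set.ncard_image_of_injective _ Sum.inl_injective, hk]

theorem configurable_of_isPartialLinear {P L : Type*} [Finite P] [Finite L] {I : P → L → Prop}
    {r k : ℕ} (hr : ∀ p, {l | I p l}.ncard = r) (hk : ∀ l, {p | I p l}.ncard = k)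
    (hI : IsPartialLinear I) (hconn : (incidenceGraph I).Preconnected) :
    Configurable (Nat.card P) (Nat.card L) r k := by
  let eP := (Finite.equivFin P).symm
  let eL := (Finite.equivFin L).symm
  refine ⟨incidenceGraph fun i j ↦ I (eP i) (eL j), isConfiguration_incidenceGraph
    (fun i ↦ ?_) (fun j ↦ ?_) (hI.comap eP.injective eL.injective) ?_⟩
  · rw [← hr (eP i)]
    exact Set.ncard_preimage_of_injective_subset_range (s := {l | I (eP i) l}) eL.injective
      (by simp [eL.surjective.range_eq])
  · rw [← hk (eL j)]
    exact Set.ncard_preimage_of_injective_subset_range (s := {p | I p (eL j)}) eP.injective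
      (by simp [eP.surjective.range_eq])
  · rw [← incidenceGraph_comap]
    exact (Iso.comap (Equiv.sumCongr eP eL) (incidenceGraph I)).preconnected_iff.2 hconn

theorem mul_gcd_mem_D_iff {n r k : ℕ} (h : 0 < r.gcd k) :
    n * r.gcd k ∈ D r k ↔ Configurable (n * k) (n * r) r k := by
  have hdiv (m : ℕ) : n * r.gcd k * m / r.gcd k = n * m := by
    rw [mul_right_comm, Nat.mul_div_cancel _ h]
  change Configurable _ _ r k ↔ _
  rw [hdiv, hdiv]

end Configuration

section VoltageLift

variable {A C M : Type*}

/-- The lift of the complete bipartite graph between `A` and `C` along the voltage assignment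
`φ` in the group `M`: over each edge `(a, c)`, the fibre of `a` is matched with the fibre of `c`
by translation by `φ a c`. -/
def VoltageIncidence [Add M] (φ : A → C → M) (p : A × M) (l : C × M) : Prop :=
  p.2 + φ p.1 l.1 = l.2

variable {φ : A → C → M}

theorem ncard_setOf_voltageIncidence_left [Add M] (p : A × M) :
    {l | VoltageIncidence φ p l}.ncard = Nat.card C := by
  have : {l | VoltageIncidence φ p l} = Set.range fun c ↦ (c, p.2 + φ p.1 c) := by
    ext ⟨c, y⟩
    simp [VoltageIncidence]
  rw [this, Set.ncard_range_of_injective fun _ _ h ↦ congrArg Prod.fst h]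

variable [AddGroup M]

theorem ncard_setOf_voltageIncidence_right (l : C × M) :
    {p | VoltageIncidence φ p l}.ncard = Nat.card A := by
  have : {p | VoltageIncidence φ p l} = Set.range fun a ↦ (a, l.2 - φ a l.1) := by
    ext ⟨a, x⟩
    simp [VoltageIncidence, sub_eq_iff_eq_add, eq_comm (a := l.2)]
  rw [this, Set.ncard_range_of_injective fun _ _ h ↦ congrArg Prod.fst h]

theorem isPartialLinear_voltageIncidence
    (hφ : ∀ a a' c c', φ a c - φ a' c = φ a c' - φ a' c' → a = a' ∨ c = c') :
    IsPartialLinear (VoltageIncidence φ) := by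
  rintro ⟨a, x⟩ ⟨a', x'⟩ ⟨c, y⟩ ⟨c', y'⟩ h₁ h₂ h₃ h₄
  have hdiff {c : C} {y : M} (h : x + φ a c = y) (h' : x' + φ a' c = y) :
      φ a c - φ a' c = -x + x' := by
    rw [sub_eq_iff_eq_add, add_assoc, h', ← h, neg_add_cancel_left]
  rcases hφ a a' c c' ((hdiff h₁ h₂).trans (hdiff h₃ h₄).symm) with rfl | rfl
  · exact .inl (congrArg (a, ·) (add_right_cancel (h₁.trans h₂.symm)))
  · exact .inr (congrArg (c, ·) (h₁.symm.trans h₃))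

theorem preconnected_voltageIncidence {a₀ : A} {c₀ : C} (ha₀ : ∀ c, φ a₀ c = 0)
    (hc₀ : ∀ a, φ a c₀ = 0) (hφ : AddSubgroup.closure (Set.range (Function.uncurry φ)) = ⊤) :
    (incidenceGraph (VoltageIncidence φ)).Preconnected := by
  set G := incidenceGraph (VoltageIncidence φ)
  have incident (a : A) (c : C) (x : M) : G.Reachable (.inl (a, x)) (.inr (c, x + φ a c)) :=
    Adj.reachable (G := G) (incidenceGraph_adj_inl_inr.2 rfl)
  have base_line (c : C) (x : M) : G.Reachable (.inl (a₀, x)) (.inr (c, x)) := by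
    simpa [ha₀] using incident a₀ c x
  have base_point (a : A) (x : M) : G.Reachable (.inl (a₀, x)) (.inl (a, x)) :=
    (base_line c₀ x).trans (by simpa [hc₀] using (incident a c₀ x).symm)
  have translate (g : M) : ∀ x, G.Reachable (.inl (a₀, x)) (.inl (a₀, x + g)) := by
    have hg : g ∈ AddSubgroup.closure (Set.range (Function.uncurry φ)) := hφ ▸ AddSubgroup.mem_top g
    induction hg using AddSubgroup.closure_induction with
    | mem g hg =>
      obtain ⟨⟨a, c⟩, rfl⟩ := hg
      exact fun x ↦ ((base_point a x).trans (incident a c x)).trans (base_line c _).symm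
    | zero => simp
    | add g h _ _ ihg ihh => exact fun x ↦ add_assoc x g h ▸ (ihg x).trans (ihh (x + g))
    | neg g _ ih => exact fun x ↦ by simpa using (ih (x + -g)).symm
  have from_zero : ∀ u, G.Reachable (.inl (a₀, 0)) u := by
    have base (x : M) : G.Reachable (.inl (a₀, 0)) (.inl (a₀, x)) := by simpa using translate x 0
    rintro (⟨a, x⟩ | ⟨c, y⟩)
    · exact (base x).trans (base_point a x)
    · exact (base y).trans (base_line c y)
  exact fun u w ↦ (from_zero u).symm.trans (from_zero w)

end VoltageLift

section MulVoltage

variable {k r : ℕ}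

/-- The voltages `(a, c) ↦ a * c` of the construction, reduced modulo `k * r + 1`. This modulus
exceeds every product of a difference of two rows with a difference of two columns, and makes
the largest voltage `k * r` equal to `-1`. Both degrees are shifted by one, so that the modulus
involves no truncated subtraction. -/
def mulVoltage (k r : ℕ) (a : Fin (k + 1)) (c : Fin (r + 1)) : ZMod (k * r + 1) :=
  (a : ℕ) * (c : ℕ)

theorem eq_or_eq_of_mulVoltage_sub_eq (a a' : Fin (k + 1)) (c c' : Fin (r + 1))
    (h : mulVoltage k r a c - mulVoltage k r a' c = mulVoltage k r a c' - mulVoltage k r a' c') :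
    a = a' ∨ c = c' := by
  have hdvd : ((k * r + 1 : ℕ) : ℤ) ∣ ((a : ℤ) - a') * ((c : ℤ) - c') := by
    rw [← ZMod.intCast_zmod_eq_zero_iff_dvd]
    simp only [mulVoltage] at h
    push_cast
    linear_combination h
  have ha : |(a : ℤ) - a'| ≤ k := by grind
  have hc : |(c : ℤ) - c'| ≤ r := by grind
  have hlt : |((a : ℤ) - a') * ((c : ℤ) - c')| < (k * r + 1 : ℕ) := by
    rw [abs_mul]
    push_cast
    exact Int.lt_add_one_of_le (by gcongr)
  rcases mul_eq_zero.1 (Int.eq_zero_of_abs_lt_dvd hdvd hlt) with h | h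
  · exact .inl (by omega)
  · exact .inr (by omega)

theorem mulVoltage_last_last : mulVoltage k r (Fin.last k) (Fin.last r) = -1 := by
  rw [eq_neg_iff_add_eq_zero, mulVoltage, Fin.val_last, Fin.val_last]
  exact_mod_cast ZMod.natCast_self (k * r + 1)

theorem closure_range_mulVoltage :
    AddSubgroup.closure (Set.range (Function.uncurry (mulVoltage k r))) = ⊤ := by
  refine (AddSubgroup.eq_top_iff' _).2 fun x ↦ ?_
  obtain ⟨m, rfl⟩ := ZMod.intCast_surjective x
  have hneg : (-1 : ZMod (k * r + 1)) ∈
      AddSubgroup.closure (Set.range (Function.uncurry (mulVoltage k r))) :=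
    AddSubgroup.subset_closure ⟨(Fin.last k, Fin.last r), mulVoltage_last_last⟩
  simpa using zsmul_mem hneg (-m)

theorem configurable_mul_add_one (r k : ℕ) :
    Configurable ((k * r + 1) * (k + 1)) ((k * r + 1) * (r + 1)) (r + 1) (k + 1) := by
  have h : Configurable (Nat.card (Fin (k + 1) × ZMod (k * r + 1)))
      (Nat.card (Fin (r + 1) × ZMod (k * r + 1))) (r + 1) (k + 1) :=
    configurable_of_isPartialLinear (I := VoltageIncidence (mulVoltage k r))
      (fun p ↦ by rw [ncard_setOf_voltageIncidence_left, Nat.card_fin])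
      (fun l ↦ by rw [ncard_setOf_voltageIncidence_right, Nat.card_fin])
      (isPartialLinear_voltageIncidence eq_or_eq_of_mulVoltage_sub_eq)
      (preconnected_voltageIncidence (a₀ := 0) (c₀ := 0) (by simp [mulVoltage])
        (by simp [mulVoltage]) closure_range_mulVoltage)
  simpa [Nat.card_prod, mul_comm] using h

end MulVoltage

/-- For every pair of positive integers `r, k` there exists a positive `d`
in `D r k`. -/
theorem exists_pos_mem_D (r k : ℕ) (hr : 0 < r) (hk : 0 < k) :
    ∃ d : ℕ, 0 < d ∧ d ∈ D r k := by
  have hgcd : 0 < r.gcd k := Nat.gcd_pos_of_pos_left k hr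
  obtain ⟨r, rfl⟩ := Nat.exists_eq_add_one.2 hr
  obtain ⟨k, rfl⟩ := Nat.exists_eq_add_one.2 hk
  exact ⟨(k * r + 1) * (r + 1).gcd (k + 1), Nat.mul_pos (k * r).succ_pos hgcd,
    (mul_gcd_mem_D_iff hgcd).2 (configurable_mul_add_one r k)⟩
end

section
/- Any (v,b,r,k)-combinatorial configuration with r ≥ 2 and k ≥ 2 (and nonempty) contains a path with five edges all of whose six vertices are distinct. -/
open SimpleGraph

/-!
In a graph of minimum degree at least two, the first vertex of a path has a neighbour besides the
second vertex of the path. Either the path can be prolonged to this neighbour, or the neighbour lies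
on the path and closes a cycle that is at most one edge longer than the path. Hence there are paths
of every length smaller than the girth. The girth of a bipartite graph without `4`-cycles is at
least `6`.
-/

section

variable {V : Type*} {G : SimpleGraph V}

theorem notMem_support_of_length_add_one_lt_egirth {u v w : V} {p : G.Walk u v} (hp : p.IsPath)
    (hlen : (p.length + 1 : ℕ) < G.egirth) (hwu : G.Adj w u) (hw : w ≠ p.snd) :
    w ∉ p.support := by
  classical
  intro hmem
  have hedge : s(w, u) ∉ (p.takeUntil w hmem).edges := fun h ↦
    hw (hp.eq_snd_of_mem_edges (Sym2.eq_swap ▸ p.edges_takeUntil_subset_edges hmem h))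
  have hcycle : (Walk.cons hwu (p.takeUntil w hmem)).IsCycle :=
    (Walk.cons_isCycle_iff _ _).mpr ⟨hp.takeUntil hmem, hedge⟩
  refine hlen.not_ge (hcycle.egirth_le_length.trans ?_)
  exact_mod_cast Nat.succ_le_succ (p.length_takeUntil_le_length hmem)

theorem exists_isPath_length_eq_of_lt_egirth (hdeg : ∀ x, (G.neighborSet x).Nontrivial)
    (v : V) {n : ℕ} (hn : n < G.egirth) :
    ∃ (u : V) (p : G.Walk u v), p.IsPath ∧ p.length = n := by
  induction n with
  | zero => exact ⟨v, .nil, .nil, rfl⟩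
  | succ n ih =>
    obtain ⟨u, p, hp, rfl⟩ := ih (lt_trans (mod_cast n.lt_succ_self) hn)
    obtain ⟨w, huw, hw⟩ := (hdeg u).exists_ne p.snd
    have hmem := notMem_support_of_length_add_one_lt_egirth hp hn huw.symm hw
    exact ⟨w, .cons huw.symm p, hp.cons hmem, rfl⟩

theorem six_le_egirth_of_isBipartite (hG : G.IsBipartite)
    (h4 : ∀ (x : V) (c : G.Walk x x), c.IsCycle → c.length ≠ 4) : 6 ≤ G.egirth := by
  refine le_egirth.mpr fun x c hc ↦ ?_
  have heven : Even c.length := two_colorable_iff_forall_loop_even.mp hG x c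
  have hthree : 3 ≤ c.length := hc.three_le_length
  have hfour : c.length ≠ 4 := h4 x c hc
  have hsix : 6 ≤ c.length := by grind
  exact_mod_cast hsix

theorem configuration_exists_path_five_general (hG : G.IsBipartite)
    (hdeg : ∀ x, (G.neighborSet x).Nontrivial)
    (h4 : ∀ (x : V) (c : G.Walk x x), c.IsCycle → c.length ≠ 4) (y : V) :
    ∃ (x : V) (p : G.Walk x y), p.IsPath ∧ p.length = 5 :=
  exists_isPath_length_eq_of_lt_egirth hdeg y <|
    lt_of_lt_of_le (by norm_num) (six_le_egirth_of_isBipartite hG h4)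

end

namespace IsConfiguration

variable {v b r k : ℕ} {G : SimpleGraph (Fin v ⊕ Fin b)}

theorem isBipartite (hG : IsConfiguration v b r k G) : G.IsBipartite := by
  obtain ⟨hleft, hright, -⟩ := hG
  refine (Coloring.mk Sum.isLeft ?_ : G.Coloring Bool).colorable
  rintro (i | i) (j | j) hadj
  · exact (hleft i j hadj).elim
  · exact Bool.noConfusion
  · exact Bool.noConfusion
  · exact (hright i j hadj).elim

theorem neighborSet_nontrivial (hG : IsConfiguration v b r k G) (hr : 2 ≤ r) (hk : 2 ≤ k)
    (x : Fin v ⊕ Fin b) : (G.neighborSet x).Nontrivial := by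
  obtain ⟨-, -, -, hleft, hright, -⟩ := hG
  rw [← Set.one_lt_ncard_iff_nontrivial]
  rcases x with i | j
  · exact hr.trans_eq (hleft i).symm
  · exact hk.trans_eq (hright j).symm

theorem length_ne_four (hG : IsConfiguration v b r k G) {x : Fin v ⊕ Fin b} {c : G.Walk x x}
    (hc : c.IsCycle) : c.length ≠ 4 :=
  hG.2.2.2.2.2 x c hc

end IsConfiguration

/-- Any nonempty `(v,b,r,k)`-combinatorial configuration with `r, k ≥ 2`
contains a path with five edges, all of whose six vertices are distinct. -/
theorem configuration_exists_path_five (v b r k : ℕ) (hr : 2 ≤ r) (hk : 2 ≤ k)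
    (hv : 0 < v) (G : SimpleGraph (Fin v ⊕ Fin b)) (hG : IsConfiguration v b r k G) :
    ∃ (x y : Fin v ⊕ Fin b) (p : G.Walk x y), p.IsPath ∧ p.length = 5 :=
  let ⟨x, p, hp⟩ := configuration_exists_path_five_general hG.isBipartite
    (hG.neighborSet_nontrivial hr hk) (fun _ _ ↦ hG.length_ne_four) (Sum.inl ⟨0, hv⟩)
  ⟨x, _, p, hp⟩
end
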